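/- Let u : ℝ^d → ℝ decompose as u = v + w with v, w ∈ C², ∇²v ≥ η I_d for some η > 0, and |∇w| ≤ M. Then the probability measure p(dx) proportional to e^{−u(x)} dx satisfies a Poincaré inequality ∫ f² dp ≤ C_P ∫ |∇f|² dp for all f ∈ H¹(p) with ∫ f dp = 0, where the constant C_P = C(η, M, d) depends only on η, M and the dimension d. -/

import Mathlib

open MeasureTheory Real Filter Set
open scoped RealInnerProductSpace Topology ENNReal NNReal

noncomputable section

/-- Euclidean space `ℝ^d`. -/
abbrev Euc (d : ℕ) := EuclideanSpace ℝ (Fin d)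

/- By the Prékopa–Leindler inequality, a probability measure with density proportional to
`exp (-V)`, where `V` is `κ`-strongly convex, satisfies `∫ exp F * ∫ exp G ≤ 1` whenever
`F x + G y ≤ κ / 4 * ‖x - y‖ ^ 2`. Expanding this to second order around `F = ε * g`,
`G = -ε * g` gives `Var g ≤ κ⁻¹ * ∫ ‖g'‖ ^ 2` (Brascamp–Lieb). The sup-convolution of `w` with a
parabola of curvature `η / 2` is within `M ^ 2 / η` of `w`, and adding it to `v` leaves an
`η / 2`-strongly convex potential. So the density for `v + w` is a bounded perturbation of a
strongly log-concave one, and by the Holley–Stroock principle the Poincaré constant grows by a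
factor of at most `exp (M ^ 2 / η)`. -/

open ProbabilityTheory
open scoped ContDiff Convolution Pointwise

section PrekopaLeindler

lemma volume_add_le_volume_add_of_isCompact {K L : Set ℝ} (hK : IsCompact K) (hL : IsCompact L)
    (hK₀ : K.Nonempty) (hL₀ : L.Nonempty) : volume K + volume L ≤ volume (K + L) := by
  obtain ⟨b, hbK, hb⟩ := hK.exists_isGreatest hK₀
  obtain ⟨a, haL, ha⟩ := hL.exists_isLeast hL₀
  have inter_subset : (a +ᵥ K) ∩ (b +ᵥ L) ⊆ {a + b} := by
    rintro _ ⟨⟨x, hx, rfl⟩, y, hy, hxy⟩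
    simp only [vadd_eq_add, mem_singleton_iff] at hxy ⊢
    linarith [hb hx, ha hy]
  have union_subset : (a +ᵥ K) ∪ (b +ᵥ L) ⊆ K + L := by
    rintro _ (⟨x, hx, rfl⟩ | ⟨y, hy, rfl⟩)
    · exact ⟨x, hx, a, haL, add_comm _ _⟩
    · exact ⟨b, hbK, y, hy, rfl⟩
  calc volume K + volume L = volume (a +ᵥ K) + volume (b +ᵥ L) := by simp [measure_vadd]
    _ = volume ((a +ᵥ K) ∪ (b +ᵥ L)) :=
        (measure_union₀ (hL.vadd b).measurableSet.nullMeasurableSet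
          (measure_mono_null inter_subset (by simp))).symm
    _ ≤ volume (K + L) := measure_mono union_subset

lemma volume_add_le_volume_add {A B : Set ℝ} (hA : MeasurableSet A) (hB : MeasurableSet B)
    (hA₀ : A.Nonempty) (hB₀ : B.Nonempty) : volume A + volume B ≤ volume (A + B) := by
  obtain ⟨a, ha⟩ := hA₀
  obtain ⟨b, hb⟩ := hB₀
  simp only [hA.measure_eq_iSup_isCompact, hB.measure_eq_iSup_isCompact, iSup_and']
  refine ENNReal.biSup_add_biSup_le' ⟨∅, by simp⟩ ⟨∅, by simp⟩ ?_
  rintro K ⟨hKA, hK⟩ L ⟨hLB, hL⟩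
  calc volume K + volume L ≤ volume (insert a K) + volume (insert b L) := by gcongr <;> simp
    _ ≤ volume (insert a K + insert b L) :=
        volume_add_le_volume_add_of_isCompact (hK.insert a) (hL.insert b) (by simp) (by simp)
    _ ≤ volume (A + B) :=
        measure_mono (add_subset_add (insert_subset ha hKA) (insert_subset hb hLB))

lemma lintegral_eq_lintegral_meas_ofReal_lt {α : Type*} [MeasurableSpace α] (μ : Measure α)
    [SFinite μ] {f : α → ℝ≥0∞} (hf : Measurable f) :
    ∫⁻ x, f x ∂μ = ∫⁻ t in Ioi (0 : ℝ), μ {x | ENNReal.ofReal t < f x} := by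
  have volume_level (c : ℝ≥0∞) :
      ∫⁻ t in Ioi (0 : ℝ), {t | ENNReal.ofReal t < c}.indicator 1 t = c := by
    rw [lintegral_indicator_one (measurableSet_lt (by fun_prop) measurable_const),
      Measure.restrict_apply (measurableSet_lt (by fun_prop) measurable_const)]
    induction c with
    | top => simp
    | coe c =>
      have : {t | ENNReal.ofReal t < c} ∩ Ioi 0 = Ioo 0 (c : ℝ) := by
        ext t
        have (ht : 0 < t) : ENNReal.ofReal t < c ↔ t < c := by
          rw [← ENNReal.ofReal_coe_nnreal, ENNReal.ofReal_lt_ofReal_iff_of_nonneg ht.le]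
        simp +contextual [and_comm (b := 0 < t), this]
      simp [this]
  have meas : MeasurableSet {p : α × ℝ | ENNReal.ofReal p.2 < f p.1} :=
    measurableSet_lt (by fun_prop) (by fun_prop)
  calc ∫⁻ x, f x ∂μ
      = ∫⁻ x, (∫⁻ t in Ioi (0 : ℝ), {t | ENNReal.ofReal t < f x}.indicator 1 t) ∂μ := by
        simp only [volume_level]
    _ = ∫⁻ t in Ioi (0 : ℝ), (∫⁻ x, {x | ENNReal.ofReal t < f x}.indicator 1 x ∂μ) :=
        lintegral_lintegral_swap (f := fun x t => indicator _ 1 (x, t))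
          (measurable_one.indicator meas).aemeasurable
    _ = ∫⁻ t in Ioi (0 : ℝ), μ {x | ENNReal.ofReal t < f x} := by
        exact lintegral_congr fun t => lintegral_indicator_one (measurableSet_lt (by fun_prop) hf)

lemma ennreal_geom_mean_le_arith_mean2_weighted {a b : ℝ} (ha : 0 < a) (hb : 0 < b)
    (hab : a + b = 1) (x y : ℝ≥0∞) :
    x ^ a * y ^ b ≤ ENNReal.ofReal a * x + ENNReal.ofReal b * y := by
  have := ENNReal.young_inequality (x ^ a) (y ^ b) (Real.HolderConjugate.inv_inv ha hb hab)
  rw [ENNReal.rpow_rpow_inv ha.ne', ENNReal.rpow_rpow_inv hb.ne', ENNReal.ofReal_inv_of_pos ha,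
    ENNReal.ofReal_inv_of_pos hb, div_eq_mul_inv, div_eq_mul_inv, inv_inv, inv_inv] at this
  rwa [mul_comm (ENNReal.ofReal a), mul_comm (ENNReal.ofReal b)]

variable {a b : ℝ}

/- On a superlevel set `{h > t}` with `t < 1` the hypothesis gives
`a • {f > t} + b • {g > t} ⊆ {h > t}`, and both summands are nonempty. -/
lemma add_lintegral_le_of_min_le (ha : 0 < a) (hb : 0 < b) {f g h : ℝ → ℝ≥0∞}
    (hf : Measurable f) (hg : Measurable g) (hh : Measurable h)
    (hf₁ : ⨆ x, f x = 1) (hg₁ : ⨆ x, g x = 1) (hfgh : ∀ x y, min (f x) (g y) ≤ h (a * x + b * y)) :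
    ENNReal.ofReal a * (∫⁻ x, f x) + ENNReal.ofReal b * (∫⁻ x, g x) ≤ ∫⁻ x, h x := by
  have meas {k : ℝ → ℝ≥0∞} (hk : Measurable k) (t : ℝ) :
      MeasurableSet {x | ENNReal.ofReal t < k x} := measurableSet_lt measurable_const hk
  have anti (k : ℝ → ℝ≥0∞) : Antitone fun t : ℝ => volume {x | ENNReal.ofReal t < k x} :=
    fun s t hst => measure_mono fun x hx => (ENNReal.ofReal_le_ofReal hst).trans_lt hx
  have empty {k : ℝ → ℝ≥0∞} (hk : ⨆ x, k x = 1) {t : ℝ} (ht : 1 ≤ t) :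
      {x | ENNReal.ofReal t < k x} = ∅ :=
    eq_empty_of_forall_notMem fun x hx =>
      (hx.trans_le (hk ▸ le_iSup k x)).not_ge (by simpa using ht)
  have nonempty {k : ℝ → ℝ≥0∞} (hk : ⨆ x, k x = 1) {t : ℝ} (ht : t < 1) :
      {x | ENNReal.ofReal t < k x}.Nonempty :=
    have ⟨x, hx⟩ := lt_iSup_iff.1 (hk ▸ (by simpa using ht : ENNReal.ofReal t < 1))
    ⟨x, hx⟩
  simp only [lintegral_eq_lintegral_meas_ofReal_lt volume, hf, hg, hh]
  rw [← lintegral_const_mul _ (anti f).measurable, ← lintegral_const_mul _ (anti g).measurable,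
    ← lintegral_add_left ((anti f).measurable.const_mul _)]
  refine lintegral_mono fun t => ?_
  rcases le_or_gt 1 t with ht | ht
  · simp [empty hf₁ ht, empty hg₁ ht]
  calc ENNReal.ofReal a * volume {x | ENNReal.ofReal t < f x}
        + ENNReal.ofReal b * volume {x | ENNReal.ofReal t < g x}
      = volume (a • {x | ENNReal.ofReal t < f x}) + volume (b • {x | ENNReal.ofReal t < g x}) := by
        simp [Measure.addHaar_smul, abs_of_pos ha, abs_of_pos hb]
    _ ≤ volume (a • {x | ENNReal.ofReal t < f x} + b • {x | ENNReal.ofReal t < g x}) :=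
        volume_add_le_volume_add ((meas hf t).const_smul_of_ne_zero ha.ne')
          ((meas hg t).const_smul_of_ne_zero hb.ne') (nonempty hf₁ ht).smul_set
          (nonempty hg₁ ht).smul_set
    _ ≤ volume {x | ENNReal.ofReal t < h x} := by
        refine measure_mono ?_
        rintro _ ⟨_, ⟨x, hx, rfl⟩, _, ⟨y, hy, rfl⟩, rfl⟩
        exact (lt_min hx hy).trans_le (hfgh x y)

lemma min_le_rpow_mul_rpow (ha : 0 < a) (hb : 0 < b) (hab : a + b = 1) (x y : ℝ≥0∞) :
    min x y ≤ x ^ a * y ^ b := by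
  calc min x y = min x y ^ a * min x y ^ b := by
        rw [← ENNReal.rpow_add_of_nonneg _ _ ha.le hb.le, hab, ENNReal.rpow_one]
    _ ≤ x ^ a * y ^ b := by gcongr <;> simp

/-- The Prékopa–Leindler inequality for a measure `μ` on a real vector space. -/
def PrekopaLeindler {E : Type*} [AddCommGroup E] [Module ℝ E] [MeasurableSpace E]
    (μ : Measure E) : Prop :=
  ∀ ⦃a b : ℝ⦄, 0 < a → 0 < b → a + b = 1 → ∀ ⦃f g h : E → ℝ≥0∞⦄,
    Measurable f → Measurable g → Measurable h →
    (∀ x y, f x ^ a * g y ^ b ≤ h (a • x + b • y)) →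
    (∫⁻ x, f x ∂μ) ^ a * (∫⁻ x, g x ∂μ) ^ b ≤ ∫⁻ x, h x ∂μ

lemma rpow_lintegral_mul_le_of_iSup_ne_top (ha : 0 < a) (hb : 0 < b) (hab : a + b = 1)
    {f g h : ℝ → ℝ≥0∞} (hf : Measurable f) (hg : Measurable g) (hh : Measurable h)
    (hf_top : ⨆ x, f x ≠ ⊤) (hg_top : ⨆ x, g x ≠ ⊤)
    (hfgh : ∀ x y, f x ^ a * g y ^ b ≤ h (a * x + b * y)) :
    (∫⁻ x, f x) ^ a * (∫⁻ x, g x) ^ b ≤ ∫⁻ x, h x := by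
  set S := ⨆ x, f x with hS
  set T := ⨆ x, g x with hT
  rcases eq_or_ne S 0 with hS₀ | hS₀
  · simp [ENNReal.iSup_eq_zero.1 hS₀, ha]
  rcases eq_or_ne T 0 with hT₀ | hT₀
  · simp [ENNReal.iSup_eq_zero.1 hT₀, hb]
  have split (x y : ℝ≥0∞) :
      (x * S⁻¹) ^ a * (y * T⁻¹) ^ b = x ^ a * y ^ b * (S⁻¹ ^ a * T⁻¹ ^ b) := by
    rw [ENNReal.mul_rpow_of_nonneg _ _ ha.le, ENNReal.mul_rpow_of_nonneg _ _ hb.le,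
      mul_mul_mul_comm]
  have scale_ne_zero : S⁻¹ ^ a * T⁻¹ ^ b ≠ 0 := by
    simp [ENNReal.rpow_eq_zero_iff, ha, hb, ha.not_gt, hb.not_gt, hf_top, hg_top]
  have scale_ne_top : S⁻¹ ^ a * T⁻¹ ^ b ≠ ⊤ := by finiteness
  have normalized := add_lintegral_le_of_min_le ha hb (hf.mul_const S⁻¹) (hg.mul_const T⁻¹)
    (hh.mul_const (S⁻¹ ^ a * T⁻¹ ^ b))
    (by rw [← ENNReal.iSup_mul, ← hS, ENNReal.mul_inv_cancel hS₀ hf_top])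
    (by rw [← ENNReal.iSup_mul, ← hT, ENNReal.mul_inv_cancel hT₀ hg_top])
    (fun x y => (min_le_rpow_mul_rpow ha hb hab _ _).trans <| by
      rw [split]
      gcongr
      exact hfgh x y)
  rw [lintegral_mul_const _ hf, lintegral_mul_const _ hg, lintegral_mul_const _ hh] at normalized
  rw [← ENNReal.mul_le_mul_iff_left scale_ne_zero scale_ne_top, ← split]
  exact (ennreal_geom_mean_le_arith_mean2_weighted ha hb hab _ _).trans normalized

lemma lintegral_eq_iSup_lintegral_min_natCast {α : Type*} [MeasurableSpace α] (μ : Measure α)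
    {f : α → ℝ≥0∞} (hf : Measurable f) : ∫⁻ x, f x ∂μ = ⨆ n : ℕ, ∫⁻ x, min (f x) n ∂μ := by
  rw [← lintegral_iSup (fun n => hf.min measurable_const)
    fun m n hmn x => min_le_min_left _ (by exact_mod_cast hmn)]
  refine lintegral_congr fun x => ?_
  rw [← inf_iSup_eq, ENNReal.iSup_natCast, inf_top_eq]

lemma prekopaLeindler_volume_real : PrekopaLeindler (volume : Measure ℝ) := by
  intro a b ha hb hab f g h hf hg hh hfgh
  have rpow_iSup {c : ℝ} (hc : 0 < c) (s : ℕ → ℝ≥0∞) : (⨆ n, s n) ^ c = ⨆ n, s n ^ c :=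
    (ENNReal.orderIsoRpow c hc).map_iSup s
  have mono (k : ℝ → ℝ≥0∞) {c : ℝ} (hc : 0 ≤ c) :
      Monotone fun n : ℕ => (∫⁻ x, min (k x) n) ^ c := fun m n hmn => by
    dsimp only; gcongr
  have iSup_ne_top (k : ℝ → ℝ≥0∞) (n : ℕ) : ⨆ x, min (k x) n ≠ ⊤ :=
    ne_top_of_le_ne_top (ENNReal.natCast_ne_top n) (iSup_le fun x => min_le_right _ _)
  rw [lintegral_eq_iSup_lintegral_min_natCast _ hf, lintegral_eq_iSup_lintegral_min_natCast _ hg,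
    rpow_iSup ha, rpow_iSup hb]
  simp only [ENNReal.iSup_mul, ENNReal.mul_iSup]
  refine iSup₂_le fun n m => ?_
  calc _ ≤ (∫⁻ x, min (f x) ↑(max m n)) ^ a * (∫⁻ x, min (g x) ↑(max m n)) ^ b :=
        mul_le_mul' (mono f ha.le (le_max_left m n)) (mono g hb.le (le_max_right m n))
    _ ≤ ∫⁻ x, h x :=
        rpow_lintegral_mul_le_of_iSup_ne_top ha hb hab (hf.min measurable_const)
          (hg.min measurable_const) hh (iSup_ne_top f _) (iSup_ne_top g _) fun x y =>
          le_trans (by gcongr <;> simp) (hfgh x y)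

namespace PrekopaLeindler

variable {E F : Type*} [AddCommGroup E] [Module ℝ E] [MeasurableSpace E]
  [AddCommGroup F] [Module ℝ F] [MeasurableSpace F] {μ : Measure E} {ν : Measure F}

protected lemma prod [SFinite ν] (hμ : PrekopaLeindler μ) (hν : PrekopaLeindler ν) :
    PrekopaLeindler (μ.prod ν) := by
  intro a b ha hb hab f g h hf hg hh hfgh
  simp only [lintegral_prod, hf.aemeasurable, hg.aemeasurable, hh.aemeasurable]
  exact hμ ha hb hab hf.lintegral_prod_right' hg.lintegral_prod_right' hh.lintegral_prod_right'
    fun x₁ x₂ => hν ha hb hab (by fun_prop) (by fun_prop) (by fun_prop)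
      fun y₁ y₂ => hfgh (x₁, y₁) (x₂, y₂)

protected lemma of_measurePreserving (hμ : PrekopaLeindler μ) (e : E →ₗ[ℝ] F)
    (he : MeasurePreserving e μ ν) : PrekopaLeindler ν := by
  intro a b ha hb hab f g h hf hg hh hfgh
  rw [← he.lintegral_comp hf, ← he.lintegral_comp hg, ← he.lintegral_comp hh]
  exact hμ ha hb hab (hf.comp he.measurable) (hg.comp he.measurable) (hh.comp he.measurable)
    fun x y => by simpa using hfgh (e x) (e y)

end PrekopaLeindler

lemma prekopaLeindler_volume_fin_fun (n : ℕ) : PrekopaLeindler (volume : Measure (Fin n → ℝ)) := by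
  induction n with
  | zero =>
    intro a b _ _ _ f g h _ _ _ hfgh
    have hfgh₀ := hfgh 0 0
    rw [Subsingleton.elim (a • 0 + b • 0) (0 : Fin 0 → ℝ)] at hfgh₀
    simpa [volume_pi, Measure.pi_of_empty _ 0] using hfgh₀
  | succ n ih =>
    have measurePreserving_cons : MeasurePreserving (Fin.consLinearEquiv ℝ fun _ => ℝ)
        ((volume : Measure ℝ).prod (volume : Measure (Fin n → ℝ))) volume := by
      have cons_eq : ⇑(Fin.consLinearEquiv ℝ fun _ : Fin (n + 1) => ℝ) =
          (MeasurableEquiv.piFinSuccAbove (fun _ => ℝ) 0).symm := by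
        ext p i
        simp [MeasurableEquiv.piFinSuccAbove]
      rw [cons_eq]
      exact (volume_preserving_piFinSuccAbove (fun _ => ℝ) 0).symm
    exact (prekopaLeindler_volume_real.prod ih).of_measurePreserving
      (Fin.consLinearEquiv ℝ fun _ => ℝ).toLinearMap measurePreserving_cons

theorem prekopaLeindler_volume (E : Type*) [NormedAddCommGroup E] [InnerProductSpace ℝ E]
    [FiniteDimensional ℝ E] [MeasurableSpace E] [BorelSpace E] :
    PrekopaLeindler (volume : Measure E) :=
  (prekopaLeindler_volume_fin_fun _).of_measurePreserving
    ((WithLp.linearEquiv 2 ℝ _).symm.trans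
      (stdOrthonormalBasis ℝ E).repr.symm.toLinearEquiv).toLinearMap
    ((stdOrthonormalBasis ℝ E).measurePreserving_repr_symm.comp (PiLp.volume_preserving_toLp _))

end PrekopaLeindler

section DualExponentialBound

variable {E : Type*} [NormedAddCommGroup E] [NormedSpace ℝ E] [MeasurableSpace E]
  {l : Measure E} {κ : ℝ} {V : E → ℝ}

/- The density `ρ` of `l.tilted (-V)` satisfies
`ρ x * ρ y ≤ exp (-κ / 4 * ‖x - y‖ ^ 2) * ρ ((x + y) / 2) ^ 2` by strong convexity of `V`, and the
Gaussian factor pays for `F x + G y`. -/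
lemma lintegral_exp_mul_lintegral_exp_le_one (hl : PrekopaLeindler l) (hV : StrongConvexOn univ κ V)
    (hVm : Measurable V) {F G : E → ℝ} (hF : Measurable F) (hG : Measurable G)
    (hFG : ∀ x y, F x + G y ≤ κ / 4 * ‖x - y‖ ^ 2) :
    (∫⁻ x, ENNReal.ofReal (exp (F x)) ∂l.tilted (-V)) *
      (∫⁻ x, ENNReal.ofReal (exp (G x)) ∂l.tilted (-V)) ≤ 1 := by
  set Z := ∫ x, exp ((-V) x) ∂l
  have Z_nonneg : 0 ≤ Z := integral_nonneg fun x => (exp_pos _).le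
  let ρ (x : E) : ℝ≥0∞ := ENNReal.ofReal (exp ((-V) x) / Z)
  have ρ_meas : Measurable ρ := by fun_prop
  have ρ_mid (x y : E) : ρ x * ENNReal.ofReal (exp (F x)) * (ρ y * ENNReal.ofReal (exp (G y))) ≤
      ρ ((1 / 2 : ℝ) • x + (1 / 2 : ℝ) • y) ^ 2 := by
    have V_mid := hV.2 (mem_univ x) (mem_univ y) (by norm_num : (0 : ℝ) ≤ 1 / 2)
      (by norm_num : (0 : ℝ) ≤ 1 / 2) (by norm_num)
    simp only [ρ, ← ENNReal.ofReal_mul (div_nonneg (exp_pos _).le Z_nonneg),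
      ← ENNReal.ofReal_mul (mul_nonneg (div_nonneg (exp_pos _).le Z_nonneg) (exp_pos _).le),
      ← ENNReal.ofReal_pow (div_nonneg (exp_pos _).le Z_nonneg)]
    refine ENNReal.ofReal_le_ofReal ?_
    calc exp ((-V) x) / Z * exp (F x) * (exp ((-V) y) / Z * exp (G y))
        = exp (-V x + F x + (-V y + G y)) / Z ^ 2 := by
          simp only [exp_add, Pi.neg_apply]; ring
      _ ≤ exp (2 * -V ((1 / 2 : ℝ) • x + (1 / 2 : ℝ) • y)) / Z ^ 2 := by
          gcongr
          simp only [smul_eq_mul] at V_mid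
          linarith [hFG x y]
      _ = _ := by simp only [two_mul, exp_add, Pi.neg_apply]; ring
  have pl := hl (by norm_num) (by norm_num) (by norm_num) (a := 1 / 2) (b := 1 / 2)
    (f := fun x => ρ x * ENNReal.ofReal (exp (F x)))
    (g := fun x => ρ x * ENNReal.ofReal (exp (G x))) (by fun_prop) (by fun_prop) ρ_meas
    (fun x y => by
      rw [← ENNReal.mul_rpow_of_nonneg _ _ (by norm_num), one_div, ENNReal.rpow_inv_le_iff two_pos]
      simpa using ρ_mid x y)
  rw [← ENNReal.mul_rpow_of_nonneg _ _ (by norm_num), one_div,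
    ENNReal.rpow_inv_le_iff two_pos] at pl
  rw [lintegral_tilted, lintegral_tilted]
  refine pl.trans ?_
  have : ∫⁻ x, ρ x ∂l ≤ 1 := by
    simpa [Measure.tilted, ρ, Z] using prob_le_one (μ := l.tilted (-V)) (s := univ)
  simpa using pow_le_pow_left' this 2

end DualExponentialBound

section SecondOrderExpansion

variable {Ω : Type*} [MeasurableSpace Ω] {μ : Measure Ω}

lemma abs_exp_sub_second_order_le {K ε s t : ℝ} (hs : |s| ≤ K) (ht : |t| ≤ K) (hε : 0 < ε)
    (hε₁ : ε ≤ 1) (hεK : 2 * K * ε ≤ 1) :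
    |(exp (ε * s + ε ^ 2 * t) - 1 - ε * s) / ε ^ 2 - (s ^ 2 / 2 + t)| ≤
      (8 * K ^ 3 + 2 * K ^ 2) * ε := by
  have hK : 0 ≤ K := (abs_nonneg s).trans hs
  set r := ε * s + ε ^ 2 * t with hr
  have abs_r : |r| ≤ 2 * K * ε := by
    calc |r| ≤ |ε * s| + |ε ^ 2 * t| := abs_add_le _ _
      _ = ε * |s| + ε ^ 2 * |t| := by simp [abs_mul, abs_of_pos hε]
      _ ≤ ε * K + ε * K := by gcongr; nlinarith
      _ = 2 * K * ε := by ring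
  have taylor : |exp r - 1 - r - r ^ 2 / 2| ≤ (2 * K * ε) ^ 3 := by
    have := Real.exp_bound (abs_r.trans hεK) (n := 3) (by norm_num)
    norm_num [Finset.sum_range_succ, Nat.factorial] at this
    calc |exp r - 1 - r - r ^ 2 / 2| = |exp r - (1 + r + r ^ 2 / 2)| := by ring_nf
      _ ≤ |r| ^ 3 * (2 / 9) := this
      _ ≤ |r| ^ 3 := by nlinarith [pow_nonneg (abs_nonneg r) 3]
      _ ≤ _ := by gcongr
  have cross : |s * t + ε * t ^ 2 / 2| ≤ 2 * K ^ 2 := by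
    calc |s * t + ε * t ^ 2 / 2| ≤ |s| * |t| + ε * |t| ^ 2 / 2 := by
          refine (abs_add_le _ _).trans_eq ?_
          simp [abs_mul, abs_div, abs_of_pos hε]
      _ ≤ K * K + 1 * K ^ 2 / 2 := by gcongr
      _ ≤ 2 * K ^ 2 := by nlinarith
  calc |(exp r - 1 - ε * s) / ε ^ 2 - (s ^ 2 / 2 + t)|
      = |(exp r - 1 - r - r ^ 2 / 2) / ε ^ 2 + ε * (s * t + ε * t ^ 2 / 2)| := by
        rw [hr]; congr 1; field_simp; ring
    _ ≤ |exp r - 1 - r - r ^ 2 / 2| / ε ^ 2 + ε * |s * t + ε * t ^ 2 / 2| := by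
        refine (abs_add_le _ _).trans_eq ?_
        simp [abs_mul, abs_div, abs_of_pos hε]
    _ ≤ (2 * K * ε) ^ 3 / ε ^ 2 + ε * (2 * K ^ 2) := by gcongr
    _ = (8 * K ^ 3 + 2 * K ^ 2) * ε := by field_simp; ring

lemma integrable_exp_of_abs_le [IsFiniteMeasure μ] {G : Ω → ℝ} (hG : AEStronglyMeasurable G μ)
    {K : ℝ} (hGK : ∀ x, |G x| ≤ K) : Integrable (fun x => exp (G x)) μ :=
  .of_bound (continuous_exp.comp_aestronglyMeasurable hG) (exp K) <| ae_of_all _ fun x => by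
    simpa using (le_abs_self _).trans (hGK x)

lemma tendsto_integral_exp_second_order [IsProbabilityMeasure μ] {G H : Ω → ℝ}
    (hG : AEStronglyMeasurable G μ) (hH : AEStronglyMeasurable H μ) {K : ℝ}
    (hGK : ∀ x, |G x| ≤ K) (hHK : ∀ x, |H x| ≤ K) :
    Tendsto (fun ε => (∫ x, exp (ε * G x + ε ^ 2 * H x) ∂μ - 1 - ε * ∫ x, G x ∂μ) / ε ^ 2)
      (𝓝[>] 0) (𝓝 (∫ x, (G x ^ 2 / 2 + H x) ∂μ)) := by
  have G_int : Integrable G μ := .of_bound hG K (ae_of_all _ hGK)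
  have limit_int : Integrable (fun x => G x ^ 2 / 2 + H x) μ := by
    refine .add (.of_bound (by fun_prop) (K ^ 2 / 2) (ae_of_all _ fun x => ?_))
      (.of_bound hH K (ae_of_all _ hHK))
    rw [norm_of_nonneg (by positivity)]
    linarith [sq_le_sq' (abs_le.1 (hGK x)).1 (abs_le.1 (hGK x)).2]
  have error_tendsto : Tendsto (fun ε : ℝ => (8 * K ^ 3 + 2 * K ^ 2) * ε) (𝓝[>] 0) (𝓝 0) :=
    tendsto_nhdsWithin_of_tendsto_nhds (Continuous.tendsto' (by fun_prop) _ _ (by simp))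
  have small : ∀ᶠ ε : ℝ in 𝓝[>] 0, ε ≤ 1 ∧ 2 * K * ε ≤ 1 :=
    nhdsWithin_le_nhds <| (eventually_le_nhds one_pos).and <|
      (Continuous.tendsto' (by fun_prop) 0 0 (by simp)).eventually_le_const one_pos
  refine tendsto_iff_dist_tendsto_zero.2 (squeeze_zero' (.of_forall fun _ => dist_nonneg) ?_
    error_tendsto)
  filter_upwards [self_mem_nhdsWithin, small] with ε (hε : 0 < ε) ⟨hε₁, hεK⟩
  have exp_int : Integrable (fun x => exp (ε * G x + ε ^ 2 * H x)) μ := by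
    refine integrable_exp_of_abs_le (by fun_prop) (K := ε * K + ε ^ 2 * K) fun x => ?_
    refine (abs_add_le _ _).trans ?_
    rw [abs_mul, abs_mul, abs_of_pos hε, abs_of_pos (pow_pos hε 2)]
    gcongr
    exacts [hGK x, hHK x]
  have quotient_int : Integrable (fun x => (exp (ε * G x + ε ^ 2 * H x) - 1 - ε * G x) / ε ^ 2) μ :=
    ((exp_int.sub (integrable_const 1)).sub (G_int.const_mul ε)).div_const _
  have quotient_eq : (∫ x, exp (ε * G x + ε ^ 2 * H x) ∂μ - 1 - ε * ∫ x, G x ∂μ) / ε ^ 2 =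
      ∫ x, (exp (ε * G x + ε ^ 2 * H x) - 1 - ε * G x) / ε ^ 2 ∂μ := by
    rw [integral_div, integral_sub (by fun_prop) (by fun_prop), integral_sub exp_int (by fun_prop),
      integral_const_mul]
    simp
  rw [quotient_eq, dist_eq_norm, ← integral_sub quotient_int limit_int]
  refine (norm_integral_le_of_norm_le_const (ae_of_all _ fun x =>
    abs_exp_sub_second_order_le (hGK x) (hHK x) hε hε₁ hεK)).trans_eq ?_
  simp

lemma variance_le_integral_of_integral_exp_mul_le_one [IsProbabilityMeasure μ] {G H : Ω → ℝ}
    (hG : AEStronglyMeasurable G μ) (hH : AEStronglyMeasurable H μ) {K : ℝ}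
    (hGK : ∀ x, |G x| ≤ K) (hHK : ∀ x, |H x| ≤ K)
    (hGH : ∀ᶠ ε : ℝ in 𝓝[>] 0,
      (∫ x, exp (ε * G x - ε ^ 2 * H x) ∂μ) * ∫ x, exp (-(ε * G x)) ∂μ ≤ 1) :
    Var[G; μ] ≤ ∫ x, H x ∂μ := by
  set m := ∫ x, G x ∂μ with hm
  have G_memLp : MemLp G 2 μ := .of_bound hG K (ae_of_all _ hGK)
  have H_int : Integrable H μ := .of_bound hH K (ae_of_all _ hHK)
  have A_tendsto := tendsto_integral_exp_second_order hG hH.neg hGK (by simpa using hHK)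
  have B_tendsto := tendsto_integral_exp_second_order (H := 0) hG.neg
    aestronglyMeasurable_zero (by simpa using hGK)
    (by simpa using fun x => (abs_nonneg _).trans (hGK x))
  simp only [Pi.neg_apply, integral_neg, ← hm] at A_tendsto B_tendsto
  set A : ℝ → ℝ := fun ε => (∫ x, exp (ε * G x + ε ^ 2 * -H x) ∂μ - 1 - ε * m) / ε ^ 2 with hA
  set B : ℝ → ℝ := fun ε => (∫ x, exp (ε * -G x + ε ^ 2 * (0 : Ω → ℝ) x) ∂μ - 1 - ε * -m) / ε ^ 2
    with hB
  have id_tendsto : Tendsto (fun ε : ℝ => ε) (𝓝[>] 0) (𝓝 0) := nhdsWithin_le_nhds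
  have product_tendsto := ((A_tendsto.add B_tendsto).sub_const (m ^ 2)).add
    ((id_tendsto.mul ((B_tendsto.sub A_tendsto).const_mul m)).add
      ((id_tendsto.pow 2).mul (A_tendsto.mul B_tendsto)))
  have product_nonpos : ∀ᶠ ε : ℝ in 𝓝[>] 0,
      A ε + B ε - m ^ 2 + (ε * (m * (B ε - A ε)) + ε ^ 2 * (A ε * B ε)) ≤ 0 := by
    filter_upwards [self_mem_nhdsWithin, hGH] with ε (hε : 0 < ε) h
    have A_eq : ∫ x, exp (ε * G x - ε ^ 2 * H x) ∂μ = 1 + ε * m + ε ^ 2 * A ε := by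
      simp only [hA, sub_eq_add_neg, ← mul_neg]; field_simp; ring
    have B_eq : ∫ x, exp (-(ε * G x)) ∂μ = 1 - ε * m + ε ^ 2 * B ε := by
      simp only [hB, ← mul_neg, Pi.zero_apply, mul_zero, add_zero]; field_simp; ring
    rw [A_eq, B_eq] at h
    refine nonpos_of_mul_nonpos_right (a := ε ^ 2) ?_ (by positivity)
    linarith
  have limit_nonpos := le_of_tendsto product_tendsto product_nonpos
  have sq_int : Integrable (fun x => G x ^ 2 / 2) μ := G_memLp.integrable_sq.div_const 2
  rw [integral_add sq_int H_int.fun_neg, integral_neg] at limit_nonpos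
  simp only [Pi.zero_apply, even_two, Even.neg_pow, add_zero, integral_div] at limit_nonpos
  rw [variance_eq_sub G_memLp]
  simp only [Pi.pow_apply]
  linarith

end SecondOrderExpansion

section StronglyLogConcave

variable {E : Type*} [NormedAddCommGroup E] [NormedSpace ℝ E]

lemma sub_le_norm_fderiv_mul_add_of_lipschitzWith {g : E → ℝ} (hg : Differentiable ℝ g) {K : ℝ≥0}
    (hK : LipschitzWith K (fderiv ℝ g)) (x y : E) :
    g x - g y ≤ ‖fderiv ℝ g x‖ * ‖x - y‖ + K * ‖x - y‖ ^ 2 := by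
  have taylor : ‖g y - g x - fderiv ℝ g x (y - x)‖ ≤ K * ‖x - y‖ * ‖y - x‖ := by
    refine (convex_closedBall x ‖x - y‖).norm_image_sub_le_of_norm_fderiv_le'
      (fun z _ => hg z) (fun z hz => ?_) (by simp) (by simp [dist_eq_norm_sub'])
    calc ‖fderiv ℝ g z - fderiv ℝ g x‖ ≤ K * ‖z - x‖ := hK.norm_sub_le z x
      _ ≤ K * ‖x - y‖ := by gcongr; simpa [dist_eq_norm] using hz
  have linear : |fderiv ℝ g x (y - x)| ≤ ‖fderiv ℝ g x‖ * ‖y - x‖ := (fderiv ℝ g x).le_opNorm _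
  rw [norm_sub_rev y x] at taylor linear
  rw [Real.norm_eq_abs] at taylor
  linarith [(abs_le.1 taylor).1, (abs_le.1 linear).1]

variable [MeasurableSpace E] [BorelSpace E] {l : Measure E} {κ : ℝ} {V : E → ℝ}

/- With `F = ε * g - ε ^ 2 * q * ‖fderiv ℝ g ·‖ ^ 2` and `G = -ε * g`, Young's inequality gives
`F x + G y ≤ ((4 * q)⁻¹ + O(ε)) * ‖x - y‖ ^ 2`, and `(4 * q)⁻¹ < κ / 4`. -/
lemma variance_tilted_le_of_inv_lt (hl : PrekopaLeindler l) (hκ : 0 < κ)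
    (hV : StrongConvexOn univ κ V) (hVm : Measurable V) [IsProbabilityMeasure (l.tilted (-V))]
    {g : E → ℝ} (hg : Differentiable ℝ g) {K : ℝ≥0} (hK : LipschitzWith K (fderiv ℝ g)) {C : ℝ}
    (hgC : ∀ x, |g x| ≤ C) (hg'C : ∀ x, ‖fderiv ℝ g x‖ ≤ C) {q : ℝ} (hq : κ⁻¹ < q) :
    Var[g; l.tilted (-V)] ≤ q * ∫ x, ‖fderiv ℝ g x‖ ^ 2 ∂l.tilted (-V) := by
  have g_meas : Measurable g := hg.continuous.measurable
  have energy_meas : Measurable fun x => q * ‖fderiv ℝ g x‖ ^ 2 :=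
    ((hK.continuous.norm.pow 2).const_mul q).measurable
  have q_pos : 0 < q := (inv_pos.2 hκ).trans hq
  have energy_le (x : E) : |q * ‖fderiv ℝ g x‖ ^ 2| ≤ max C (q * C ^ 2) := by
    rw [abs_of_nonneg (by positivity)]
    exact le_max_of_le_right (by gcongr; exact hg'C x)
  rw [← integral_const_mul]
  refine variance_le_integral_of_integral_exp_mul_le_one g_meas.aestronglyMeasurable
    energy_meas.aestronglyMeasurable (fun x => le_max_of_le_left (hgC x)) energy_le ?_
  have slack : ∀ᶠ ε : ℝ in 𝓝[>] 0, (4 * q)⁻¹ + ε * K ≤ κ / 4 := by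
    refine nhdsWithin_le_nhds <| (Continuous.tendsto' (by fun_prop) 0 (4 * q)⁻¹
      (by simp)).eventually_le_const ?_
    rw [mul_inv, div_eq_inv_mul]
    gcongr
    exact inv_lt_of_inv_lt₀ hκ hq
  filter_upwards [self_mem_nhdsWithin, slack] with ε (hε : 0 < ε) hslack
  have exponents_le (x y : E) : ε * g x - ε ^ 2 * (q * ‖fderiv ℝ g x‖ ^ 2) + -(ε * g y) ≤
      κ / 4 * ‖x - y‖ ^ 2 := by
    set D := ‖fderiv ℝ g x‖
    have young : ε * (D * ‖x - y‖) ≤ ε ^ 2 * (q * D ^ 2) + (4 * q)⁻¹ * ‖x - y‖ ^ 2 := by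
      have := sq_nonneg (2 * q * ε * D - ‖x - y‖)
      field_simp
      linarith
    calc ε * g x - ε ^ 2 * (q * D ^ 2) + -(ε * g y)
        = ε * (g x - g y) - ε ^ 2 * (q * D ^ 2) := by ring
      _ ≤ ε * (D * ‖x - y‖ + K * ‖x - y‖ ^ 2) - ε ^ 2 * (q * D ^ 2) := by
          gcongr
          exact sub_le_norm_fderiv_mul_add_of_lipschitzWith hg hK x y
      _ ≤ ((4 * q)⁻¹ + ε * K) * ‖x - y‖ ^ 2 := by linarith
      _ ≤ κ / 4 * ‖x - y‖ ^ 2 := by gcongr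
  have product_le := lintegral_exp_mul_lintegral_exp_le_one hl hV hVm
    ((g_meas.const_mul ε).sub (energy_meas.const_mul _)) (g_meas.const_mul ε).neg exponents_le
  rw [integral_eq_lintegral_of_nonneg_ae (ae_of_all _ fun _ => (exp_pos _).le) (by fun_prop),
    integral_eq_lintegral_of_nonneg_ae (ae_of_all _ fun _ => (exp_pos _).le) (by fun_prop),
    ← ENNReal.toReal_mul]
  exact ENNReal.toReal_le_of_le_ofReal zero_le_one (by simpa using product_le)

lemma variance_tilted_le_of_lipschitzWith_fderiv (hl : PrekopaLeindler l) (hκ : 0 < κ)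
    (hV : StrongConvexOn univ κ V) (hVm : Measurable V) [IsProbabilityMeasure (l.tilted (-V))]
    {g : E → ℝ} (hg : Differentiable ℝ g) {K : ℝ≥0} (hK : LipschitzWith K (fderiv ℝ g)) {C : ℝ}
    (hgC : ∀ x, |g x| ≤ C) (hg'C : ∀ x, ‖fderiv ℝ g x‖ ≤ C) :
    Var[g; l.tilted (-V)] ≤ κ⁻¹ * ∫ x, ‖fderiv ℝ g x‖ ^ 2 ∂l.tilted (-V) :=
  ge_of_tendsto (x := 𝓝[>] κ⁻¹)
    ((continuous_mul_const _).continuousAt.tendsto.mono_left nhdsWithin_le_nhds)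
    (eventually_mem_nhdsWithin.mono fun _ hq =>
      variance_tilted_le_of_inv_lt hl hκ hV hVm hg hK hgC hg'C hq)

end StronglyLogConcave

section Mollification

open ContinuousLinearMap (lsmul)

variable {F : Type*} [NormedAddCommGroup F] [NormedSpace ℝ F]

lemma enorm_integral_sq_le_lintegral_enorm_sq {Ω : Type*} [MeasurableSpace Ω] {μ : Measure Ω}
    [IsProbabilityMeasure μ] {f : Ω → F} (hf : AEStronglyMeasurable f μ) :
    ‖∫ x, f x ∂μ‖ₑ ^ 2 ≤ ∫⁻ x, ‖f x‖ₑ ^ 2 ∂μ := by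
  have eLpNorm_le := eLpNorm_le_eLpNorm_of_exponent_le one_le_two hf
  calc ‖∫ x, f x ∂μ‖ₑ ^ 2 ≤ eLpNorm f 1 μ ^ 2 := by
        rw [eLpNorm_one_eq_lintegral_enorm]; gcongr; exact enorm_integral_le_lintegral_enorm f
    _ ≤ eLpNorm f 2 μ ^ 2 := by gcongr
    _ = ∫⁻ x, ‖f x‖ₑ ^ 2 ∂μ := by
        simpa using eLpNorm_nnreal_pow_eq_lintegral (μ := μ) (f := f) (p := 2) two_ne_zero

variable {E : Type*} [NormedAddCommGroup E] [MeasurableSpace E] [BorelSpace E] {m : Measure E}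

lemma enorm_convolution_sq_le_lintegral {ψ : E → ℝ} (hψ : Measurable ψ) (hψ₀ : ∀ t, 0 ≤ ψ t)
    (hψ₁ : ∫⁻ t, ENNReal.ofReal (ψ t) ∂m = 1) {G : E → F} (hG : StronglyMeasurable G) (x : E) :
    ‖(ψ ⋆[lsmul ℝ ℝ, m] G) x‖ₑ ^ 2 ≤ ∫⁻ t, ENNReal.ofReal (ψ t) * ‖G (x - t)‖ₑ ^ 2 ∂m := by
  have : IsProbabilityMeasure (m.withDensity fun t => ENNReal.ofReal (ψ t)) :=
    ⟨by rwa [withDensity_apply _ .univ, setLIntegral_univ]⟩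
  have G_meas : StronglyMeasurable fun t => G (x - t) := hG.comp_measurable (by fun_prop)
  calc ‖(ψ ⋆[lsmul ℝ ℝ, m] G) x‖ₑ ^ 2
      = ‖∫ t, G (x - t) ∂m.withDensity fun t => ENNReal.ofReal (ψ t)‖ₑ ^ 2 := by
        rw [integral_withDensity_eq_integral_toReal_smul (by fun_prop) (by simp)]
        simp [convolution, hψ₀]
    _ ≤ _ := enorm_integral_sq_le_lintegral_enorm_sq G_meas.aestronglyMeasurable
    _ = _ := lintegral_withDensity_eq_lintegral_mul _ (by fun_prop) (G_meas.enorm.pow_const 2)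

lemma lintegral_enorm_convolution_sq_mul_le [SecondCountableTopology E] [SFinite m]
    [m.IsAddRightInvariant] {ψ : E → ℝ} (hψ : Measurable ψ) (hψ₀ : ∀ t, 0 ≤ ψ t)
    (hψ₁ : ∫⁻ t, ENNReal.ofReal (ψ t) ∂m = 1) {G : E → F} (hG : StronglyMeasurable G)
    {ρ : E → ℝ≥0∞} (hρ : Measurable ρ) {c : ℝ≥0∞}
    (hc : ∀ x ∈ Function.support G, ∀ t ∈ Function.support ψ, ρ (x + t) ≤ c * ρ x) :
    ∫⁻ x, ‖(ψ ⋆[lsmul ℝ ℝ, m] G) x‖ₑ ^ 2 * ρ x ∂m ≤ c * ∫⁻ x, ‖G x‖ₑ ^ 2 * ρ x ∂m := by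
  have : Measurable fun x => ‖G x‖ₑ := hG.enorm
  have shift_le (t : E) (ht : t ∈ Function.support ψ) :
      ∫⁻ x, ‖G x‖ₑ ^ 2 * ρ (x + t) ∂m ≤ c * ∫⁻ x, ‖G x‖ₑ ^ 2 * ρ x ∂m := by
    rw [← lintegral_const_mul _ (by fun_prop)]
    refine lintegral_mono fun x => ?_
    by_cases hx : G x = 0
    · simp [hx]
    · rw [mul_left_comm]
      gcongr
      exact hc x hx t ht
  calc ∫⁻ x, ‖(ψ ⋆[lsmul ℝ ℝ, m] G) x‖ₑ ^ 2 * ρ x ∂m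
      ≤ ∫⁻ x, (∫⁻ t, ENNReal.ofReal (ψ t) * ‖G (x - t)‖ₑ ^ 2 ∂m) * ρ x ∂m := by
        gcongr with x
        exact enorm_convolution_sq_le_lintegral hψ hψ₀ hψ₁ hG x
    _ = ∫⁻ t, ∫⁻ x, ENNReal.ofReal (ψ t) * ‖G (x - t)‖ₑ ^ 2 * ρ x ∂m ∂m := by
        rw [lintegral_lintegral_swap (by fun_prop)]
        exact lintegral_congr fun x => (lintegral_mul_const _ (by fun_prop)).symm
    _ = ∫⁻ t, ENNReal.ofReal (ψ t) * ∫⁻ x, ‖G x‖ₑ ^ 2 * ρ (x + t) ∂m ∂m := by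
        refine lintegral_congr fun t => ?_
        rw [← lintegral_add_right_eq_self _ t, ← lintegral_const_mul _ (by fun_prop)]
        simp [mul_assoc]
    _ ≤ ∫⁻ t, ENNReal.ofReal (ψ t) * (c * ∫⁻ x, ‖G x‖ₑ ^ 2 * ρ x ∂m) ∂m := by
        refine lintegral_mono fun t => ?_
        by_cases ht : ψ t = 0
        · simp [ht]
        · exact mul_le_mul_right (shift_le t ht) _
    _ = c * ∫⁻ x, ‖G x‖ₑ ^ 2 * ρ x ∂m := by
        rw [lintegral_mul_const _ (by fun_prop), hψ₁, one_mul]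

variable [NormedSpace ℝ E] [FiniteDimensional ℝ E]

lemma fderiv_convolution_eq_convolution_fderiv [m.IsAddHaarMeasure] {ψ : E → ℝ}
    (hψ : HasCompactSupport ψ) (hψc : ContDiff ℝ 1 ψ) {f : E → F} (hf : Differentiable ℝ f)
    (hf' : LocallyIntegrable (fderiv ℝ f) m) :
    fderiv ℝ (ψ ⋆[lsmul ℝ ℝ, m] f) = ψ ⋆[lsmul ℝ ℝ, m] fderiv ℝ f := by
  ext x v
  set L : ℝ →L[ℝ] F →L[ℝ] F := lsmul ℝ ℝ
  have f_int : LocallyIntegrable f m := hf.continuous.locallyIntegrable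
  have ψ'_supp : HasCompactSupport fun t => fderiv ℝ ψ t v := hψ.fderiv_apply ℝ v
  have ψ'_cont : Continuous fun t => fderiv ℝ ψ t v :=
    (hψc.continuous_fderiv one_ne_zero).clm_apply continuous_const
  have f'_int : LocallyIntegrable (fun t => fderiv ℝ f t v) m := fun z =>
    (hf' z).imp fun s hs => ⟨hs.1, hs.2.apply_continuousLinearMap v⟩
  have deriv_left : fderiv ℝ (ψ ⋆[L, m] f) x v = ((fun t => fderiv ℝ ψ t v) ⋆[L, m] f) x := by
    simp +singlePass only [← convolution_flip]
    rw [(hψ.hasFDerivAt_convolution_right L.flip f_int hψc x).fderiv,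
      convolution_precompR_apply _ f_int (hψ.fderiv ℝ) (hψc.continuous_fderiv one_ne_zero)]
  have deriv_reflect (t : E) : HasFDerivAt (fun t => f (x - t)) (-fderiv ℝ f (x - t)) t := by
    simpa using! (hf (x - t)).hasFDerivAt.comp t ((hasFDerivAt_id t).const_sub x)
  have int_by_parts := integral_smul_fderiv_eq_neg_fderiv_smul_of_integrable (μ := m) (v := v)
    (ψ'_supp.convolutionExists_left L ψ'_cont f_int x)
    (by simpa [(deriv_reflect _).fderiv] using!
      (hψ.convolutionExists_left L hψc.continuous f'_int x).neg)
    (hψ.convolutionExists_left L hψc.continuous f_int x)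
    (fun t _ => hψc.differentiable one_ne_zero t)
    (fun t _ => (deriv_reflect t).differentiableAt)
  simp only [(deriv_reflect _).fderiv, neg_apply, smul_neg, integral_neg, neg_inj] at int_by_parts
  have f'_conv_int : Integrable (fun t => ψ t • fderiv ℝ f (x - t)) m :=
    hψ.convolutionExists_left (lsmul ℝ ℝ) hψc.continuous hf' x
  calc fderiv ℝ (ψ ⋆[L, m] f) x v = ∫ t, (ψ t • fderiv ℝ f (x - t)) v ∂m :=
        deriv_left.trans int_by_parts.symm
    _ = (ψ ⋆[lsmul ℝ ℝ, m] fderiv ℝ f) x v :=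
        (ContinuousLinearMap.integral_apply f'_conv_int v).symm

end Mollification

section Approximation

variable {E : Type*} [NormedAddCommGroup E] [NormedSpace ℝ E] [FiniteDimensional ℝ E]
  [MeasurableSpace E] [BorelSpace E] {m : Measure E} {V : E → ℝ}

lemma locallyIntegrable_of_integrable_tilted {F : Type*} [NormedAddCommGroup F] [NormedSpace ℝ F]
    (hV : Continuous V) (hVm : Integrable (fun x => exp (V x)) m) {f : E → F}
    (hf : Integrable f (m.tilted V)) : LocallyIntegrable f m := by
  have weighted := ((integrable_tilted_iff hVm f).1 hf).locallyIntegrable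
  rw [← locallyIntegrableOn_univ] at weighted ⊢
  simpa [smul_smul, ← exp_add] using
    weighted.continuousOn_smul isOpen_univ.isLocallyClosed (g := fun x => exp (-V x)) (by fun_prop)

lemma exists_pos_forall_mem_norm_lt_exp_add_le {E : Type*} [SeminormedAddCommGroup E] {V : E → ℝ}
    (hV : Continuous V) {K : Set E} (hK : IsCompact K) {ε : ℝ} (hε : 0 < ε) :
    ∃ δ > 0, ∀ x ∈ K, ∀ t, ‖t‖ < δ → exp (V (x + t)) ≤ exp ε * exp (V x) := by
  obtain ⟨δ, δ_pos, hδ⟩ := Metric.mem_uniformity_dist.1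
    (hK.uniformContinuousAt_of_continuousAt V (fun x _ => hV.continuousAt)
      (Metric.dist_mem_uniformity hε))
  refine ⟨δ, δ_pos, fun x hx t ht => ?_⟩
  have := hδ (show dist x (x + t) < δ by simpa using ht) hx
  rw [← exp_add]
  gcongr
  rw [mem_ofPred_eq, Real.dist_eq] at this
  linarith [(abs_lt.1 this).1]

lemma exists_contDiff_hasCompactSupport_lintegral_enorm_fderiv_sq_le [m.IsAddHaarMeasure]
    (hV : Continuous V) (hVm : Integrable (fun x => exp (V x)) m) {f : E → ℝ}
    (hf : Differentiable ℝ f) (hfs : HasCompactSupport f)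
    (hf' : Integrable (fderiv ℝ f) (m.tilted V)) {ε : ℝ} (hε : 0 < ε) :
    ∃ g : E → ℝ, ContDiff ℝ ∞ g ∧ HasCompactSupport g ∧ (∀ x, |g x - f x| ≤ ε) ∧
      ∫⁻ x, ‖fderiv ℝ g x‖ₑ ^ 2 ∂m.tilted V ≤
        ENNReal.ofReal (exp ε) * ∫⁻ x, ‖fderiv ℝ f x‖ₑ ^ 2 ∂m.tilted V := by
  obtain ⟨δ₁, δ₁_pos, f_close⟩ := Metric.uniformContinuous_iff.1
    (hfs.uniformContinuous_of_continuous hf.continuous) ε hε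
  obtain ⟨δ₂, δ₂_pos, V_close⟩ := exists_pos_forall_mem_norm_lt_exp_add_le hV hfs hε
  have δ_pos : 0 < min δ₁ δ₂ := lt_min δ₁_pos δ₂_pos
  let φ : ContDiffBump (0 : E) := ⟨min δ₁ δ₂ / 2, min δ₁ δ₂, half_pos δ_pos, half_lt_self δ_pos⟩
  have φ_supp : HasCompactSupport (φ.normed m) := φ.hasCompactSupport_normed
  have φ_lintegral : ∫⁻ t, ENNReal.ofReal (φ.normed m t) ∂m = 1 := by
    rw [← ofReal_integral_eq_lintegral_ofReal φ.integrable_normed (ae_of_all _ φ.nonneg_normed),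
      φ.integral_normed, ENNReal.ofReal_one]
  refine ⟨φ.normed m ⋆[ContinuousLinearMap.lsmul ℝ ℝ, m] f,
    φ_supp.contDiff_convolution_left _ φ.contDiff_normed hf.continuous.locallyIntegrable,
    φ_supp.convolution _ hfs, fun x => ?_, ?_⟩
  · exact φ.dist_normed_convolution_le hf.continuous.aestronglyMeasurable fun y hy =>
      (f_close (hy.trans_le (min_le_left _ _))).le
  set ρ : E → ℝ≥0∞ := fun x => ENNReal.ofReal (exp (V x) / ∫ y, exp (V y) ∂m) with hρ
  have ρ_close : ∀ x ∈ Function.support (fderiv ℝ f), ∀ t ∈ Function.support (φ.normed m),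
      ρ (x + t) ≤ ENNReal.ofReal (exp ε) * ρ x := by
    intro x hx t ht
    rw [φ.support_normed_eq, mem_ball_zero_iff] at ht
    rw [hρ, ← ENNReal.ofReal_mul (exp_pos _).le, ← mul_div_assoc]
    refine ENNReal.ofReal_le_ofReal (div_le_div_of_nonneg_right ?_
      (integral_nonneg fun x => (exp_pos _).le))
    exact V_close x (support_fderiv_subset ℝ hx) t (ht.trans_le (min_le_right _ _))
  rw [fderiv_convolution_eq_convolution_fderiv φ_supp φ.contDiff_normed hf
    (locallyIntegrable_of_integrable_tilted hV hVm hf'), lintegral_tilted, lintegral_tilted]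
  simpa only [mul_comm] using lintegral_enorm_convolution_sq_mul_le φ.continuous_normed.measurable
    φ.nonneg_normed φ_lintegral (measurable_fderiv ℝ f).stronglyMeasurable (by fun_prop) ρ_close

lemma integral_norm_sq_eq_toReal_lintegral {Ω F : Type*} [MeasurableSpace Ω]
    [NormedAddCommGroup F] {μ : Measure Ω} {f : Ω → F} (hf : AEStronglyMeasurable f μ) :
    ∫ x, ‖f x‖ ^ 2 ∂μ = (∫⁻ x, ‖f x‖ₑ ^ 2 ∂μ).toReal := by
  rw [integral_eq_lintegral_of_nonneg_ae (ae_of_all _ fun x => sq_nonneg _) (by fun_prop)]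
  simp [ENNReal.ofReal_pow]

lemma exists_contDiff_hasCompactSupport_integral_norm_fderiv_sq_le [m.IsAddHaarMeasure]
    (hV : Continuous V) (hVm : Integrable (fun x => exp (V x)) m) {f : E → ℝ}
    (hf : Differentiable ℝ f) (hfs : HasCompactSupport f)
    (hf' : MemLp (fderiv ℝ f) 2 (m.tilted V)) {ε : ℝ} (hε : 0 < ε) :
    ∃ g : E → ℝ, ContDiff ℝ ∞ g ∧ HasCompactSupport g ∧ (∀ x, |g x - f x| ≤ ε) ∧
      ∫ x, ‖fderiv ℝ g x‖ ^ 2 ∂m.tilted V ≤ exp ε * ∫ x, ‖fderiv ℝ f x‖ ^ 2 ∂m.tilted V := by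
  obtain ⟨g, g_smooth, g_supp, g_close, energy_le⟩ :=
    exists_contDiff_hasCompactSupport_lintegral_enorm_fderiv_sq_le hV hVm hf hfs
      (hf'.integrable one_le_two) hε
  refine ⟨g, g_smooth, g_supp, g_close, ?_⟩
  rw [integral_norm_sq_eq_toReal_lintegral (measurable_fderiv ℝ g).aestronglyMeasurable,
    integral_norm_sq_eq_toReal_lintegral hf'.1, ← ENNReal.toReal_ofReal (exp_pos ε).le,
    ← ENNReal.toReal_mul]
  refine ENNReal.toReal_mono (ENNReal.mul_ne_top ENNReal.ofReal_ne_top ?_) energy_le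
  simpa using (lintegral_rpow_enorm_lt_top_of_eLpNorm_lt_top two_ne_zero ENNReal.ofNat_ne_top
    hf'.2).ne

end Approximation

/-- The Poincaré inequality with constant `C`, on the classically differentiable functions of
`L²(μ)` whose derivative is in `L²(μ)`. -/
def PoincareInequality {E : Type*} [NormedAddCommGroup E] [NormedSpace ℝ E] [MeasurableSpace E]
    (μ : Measure E) (C : ℝ) : Prop :=
  ∀ ⦃f : E → ℝ⦄, Differentiable ℝ f → MemLp f 2 μ → MemLp (fderiv ℝ f) 2 μ →
    Var[f; μ] ≤ C * ∫ x, ‖fderiv ℝ f x‖ ^ 2 ∂μ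

section PoincareInequality

lemma tendsto_variance_of_dominated {Ω : Type*} [MeasurableSpace Ω] {μ : Measure Ω}
    [IsProbabilityMeasure μ] {F : ℕ → Ω → ℝ} {f bound : Ω → ℝ}
    (hF : ∀ n, AEStronglyMeasurable (F n) μ) (hbound : MemLp bound 2 μ)
    (hle : ∀ n, ∀ᵐ x ∂μ, |F n x| ≤ bound x)
    (hlim : ∀ᵐ x ∂μ, Tendsto (fun n => F n x) atTop (𝓝 (f x))) :
    Tendsto (fun n => Var[F n; μ]) atTop (𝓝 Var[f; μ]) := by
  have F_memLp (n : ℕ) : MemLp (F n) 2 μ := hbound.mono' (hF n) (hle n)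
  have f_memLp : MemLp f 2 μ := by
    refine hbound.mono' (aestronglyMeasurable_of_tendsto_ae _ hF hlim) ?_
    filter_upwards [ae_all_iff.2 hle, hlim] with x hle hlim
    exact le_of_tendsto' hlim.abs hle
  simp only [variance_eq_sub, F_memLp, f_memLp]
  refine .sub ?_ (.pow ?_ 2)
  · refine tendsto_integral_of_dominated_convergence (fun x => bound x ^ 2)
      (fun n => (hF n).pow 2) hbound.integrable_sq (fun n => ?_) (hlim.mono fun x hx => hx.pow 2)
    filter_upwards [hle n] with x hx
    simpa using pow_le_pow_left₀ (abs_nonneg _) hx 2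
  · exact tendsto_integral_of_dominated_convergence bound hF (hbound.integrable one_le_two) hle hlim

variable {E : Type*} [NormedAddCommGroup E] [NormedSpace ℝ E] [FiniteDimensional ℝ E]

lemma exists_seq_hasCompactSupport_eventuallyEq {f : E → ℝ} (hf : Differentiable ℝ f) :
    ∃ (L : ℝ) (F : ℕ → E → ℝ), (∀ n, Differentiable ℝ (F n)) ∧ (∀ n, HasCompactSupport (F n)) ∧
      (∀ n x, |F n x| ≤ |f x|) ∧ (∀ n x, ‖fderiv ℝ (F n) x‖ ≤ ‖fderiv ℝ f x‖ + L * |f x|) ∧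
      ∀ x, ∀ᶠ n in atTop, F n =ᶠ[𝓝 x] f := by
  let χ : ContDiffBump (0 : E) := ⟨1, 2, one_pos, one_lt_two⟩
  have χ_smooth : ContDiff ℝ 1 χ := χ.contDiff
  obtain ⟨L, hL⟩ := (χ.hasCompactSupport.fderiv ℝ).exists_bound_of_continuous
    (χ_smooth.continuous_fderiv one_ne_zero)
  let c (n : ℕ) : ℝ := (n + 1 : ℝ)⁻¹
  have c_pos (n : ℕ) : 0 < c n := by positivity
  have c_le (n : ℕ) : c n ≤ 1 := inv_le_one_of_one_le₀ (by simp)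
  have cutoff_deriv (n : ℕ) (x : E) :
      HasFDerivAt (fun x => χ (c n • x)) (c n • fderiv ℝ χ (c n • x)) x := by
    have := (χ_smooth.differentiable one_ne_zero (c n • x)).hasFDerivAt.comp x
      ((hasFDerivAt_id x).const_smul (c n))
    convert! this using 1
    ext v
    simp
  have product_deriv (n : ℕ) (x : E) := (cutoff_deriv n x).fun_mul (hf x).hasFDerivAt
  refine ⟨L, fun n x => χ (c n • x) * f x, fun n x => (product_deriv n x).differentiableAt,
    fun n => ?_, fun n x => ?_, fun n x => ?_, fun x => ?_⟩
  · exact (χ.hasCompactSupport.comp_homeomorph (.smulOfNeZero _ (c_pos n).ne')).mul_right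
  · rw [abs_mul, abs_of_nonneg χ.nonneg]
    exact mul_le_of_le_one_left (abs_nonneg _) χ.le_one
  · rw [(product_deriv n x).fderiv]
    refine (norm_add_le _ _).trans (add_le_add ?_ ?_)
    · rw [norm_smul, norm_of_nonneg χ.nonneg]
      exact mul_le_of_le_one_left (norm_nonneg _) χ.le_one
    · rw [norm_smul, norm_smul, norm_of_nonneg (c_pos n).le, mul_comm, Real.norm_eq_abs]
      gcongr
      exact (mul_le_of_le_one_left (norm_nonneg _) (c_le n)).trans (hL _)
  · filter_upwards [tendsto_natCast_atTop_atTop.eventually_gt_atTop ‖x‖] with n hn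
    filter_upwards [continuous_norm.continuousAt.eventually_lt_const hn] with y hy
    rw [χ.one_of_mem_closedBall, one_mul]
    rw [mem_closedBall_zero_iff, norm_smul, norm_of_nonneg (c_pos n).le,
      inv_mul_le_one₀ (by positivity)]
    linarith

variable [MeasurableSpace E] [BorelSpace E] {m : Measure E} {V : E → ℝ} {C : ℝ}

lemma variance_le_of_hasCompactSupport [m.IsAddHaarMeasure] (hV : Continuous V)
    (hVm : Integrable (fun x => exp (V x)) m) (hC : 0 ≤ C)
    (h : ∀ g : E → ℝ, ContDiff ℝ ∞ g → HasCompactSupport g →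
      Var[g; m.tilted V] ≤ C * ∫ x, ‖fderiv ℝ g x‖ ^ 2 ∂m.tilted V)
    {f : E → ℝ} (hf : Differentiable ℝ f) (hfs : HasCompactSupport f)
    (hf' : MemLp (fderiv ℝ f) 2 (m.tilted V)) :
    Var[f; m.tilted V] ≤ C * ∫ x, ‖fderiv ℝ f x‖ ^ 2 ∂m.tilted V := by
  have := isProbabilityMeasure_tilted hVm
  let ε (n : ℕ) : ℝ := 1 / (n + 1)
  have ε_pos (n : ℕ) : 0 < ε n := Nat.one_div_pos_of_nat
  have ε_le (n : ℕ) : ε n ≤ 1 := by simpa [ε] using inv_le_one_of_one_le₀ (by simp)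
  have ε_tendsto : Tendsto ε atTop (𝓝 0) := tendsto_one_div_add_atTop_nhds_zero_nat
  choose g g_smooth g_supp g_close energy_le using fun n =>
    exists_contDiff_hasCompactSupport_integral_norm_fderiv_sq_le hV hVm hf hfs hf' (ε_pos n)
  obtain ⟨B, hB⟩ := hfs.exists_bound_of_continuous hf.continuous
  have variance_tendsto : Tendsto (fun n => Var[g n; m.tilted V]) atTop (𝓝 Var[f; m.tilted V]) := by
    refine tendsto_variance_of_dominated (bound := fun _ => B + 1)
      (fun n => (g_smooth n).continuous.aestronglyMeasurable) (memLp_const _)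
      (fun n => ae_of_all _ fun x => ?_) (ae_of_all _ fun x => ?_)
    · calc |g n x| = |f x + (g n x - f x)| := by ring_nf
        _ ≤ B + 1 := (abs_add_le _ _).trans (add_le_add (hB x) ((g_close n x).trans (ε_le n)))
    · exact tendsto_iff_dist_tendsto_zero.2
        (squeeze_zero (fun _ => dist_nonneg) (fun n => g_close n x) ε_tendsto)
  have exp_tendsto : Tendsto (fun n => C * (exp (ε n) * ∫ x, ‖fderiv ℝ f x‖ ^ 2 ∂m.tilted V)) atTop
      (𝓝 (C * ∫ x, ‖fderiv ℝ f x‖ ^ 2 ∂m.tilted V)) := by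
    simpa using (ε_tendsto.rexp.mul_const (∫ x, ‖fderiv ℝ f x‖ ^ 2 ∂m.tilted V)).const_mul C
  exact le_of_tendsto_of_tendsto' variance_tendsto exp_tendsto fun n =>
    (h (g n) (g_smooth n) (g_supp n)).trans (mul_le_mul_of_nonneg_left (energy_le n) hC)

lemma poincareInequality_tilted_of_contDiff_hasCompactSupport [m.IsAddHaarMeasure]
    (hV : Continuous V) (hVm : Integrable (fun x => exp (V x)) m) (hC : 0 ≤ C)
    (h : ∀ g : E → ℝ, ContDiff ℝ ∞ g → HasCompactSupport g →
      Var[g; m.tilted V] ≤ C * ∫ x, ‖fderiv ℝ g x‖ ^ 2 ∂m.tilted V) :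
    PoincareInequality (m.tilted V) C := by
  intro f hf f_memLp f'_memLp
  have := isProbabilityMeasure_tilted hVm
  obtain ⟨L, F, F_diff, F_supp, F_le, F'_le, F_eq⟩ := exists_seq_hasCompactSupport_eventuallyEq hf
  have F'_meas (n : ℕ) : AEStronglyMeasurable (fderiv ℝ (F n)) (m.tilted V) :=
    (measurable_fderiv ℝ (F n)).aestronglyMeasurable
  have bound_memLp : MemLp (fun x => ‖fderiv ℝ f x‖ + L * |f x|) 2 (m.tilted V) :=
    f'_memLp.norm.add (f_memLp.abs.const_mul L)
  have variance_tendsto := tendsto_variance_of_dominated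
    (fun n => (F_diff n).continuous.aestronglyMeasurable) f_memLp.abs
    (fun n => ae_of_all _ (F_le n)) (ae_of_all _ fun x =>
      tendsto_nhds_of_eventually_eq ((F_eq x).mono fun n hn => hn.eq_of_nhds))
  have energy_tendsto : Tendsto (fun n => ∫ x, ‖fderiv ℝ (F n) x‖ ^ 2 ∂m.tilted V) atTop
      (𝓝 (∫ x, ‖fderiv ℝ f x‖ ^ 2 ∂m.tilted V)) := by
    refine tendsto_integral_of_dominated_convergence _ (fun n => (F'_meas n).norm.pow 2)
      bound_memLp.integrable_sq (fun n => ae_of_all _ fun x => ?_) (ae_of_all _ fun x => ?_)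
    · simpa using pow_le_pow_left₀ (norm_nonneg _) (F'_le n x) 2
    · exact tendsto_nhds_of_eventually_eq ((F_eq x).mono fun n hn => by simp only [hn.fderiv_eq])
  exact le_of_tendsto_of_tendsto' variance_tendsto (energy_tendsto.const_mul C) fun n =>
    variance_le_of_hasCompactSupport hV hVm hC h (F_diff n) (F_supp n)
      (bound_memLp.mono' (F'_meas n) (ae_of_all _ (F'_le n)))

end PoincareInequality

lemma continuous_of_strongConvexOn_univ {E : Type*} [NormedAddCommGroup E] [NormedSpace ℝ E]
    [FiniteDimensional ℝ E] {V : E → ℝ} {κ : ℝ} (hκ : 0 ≤ κ) (hV : StrongConvexOn univ κ V) :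
    Continuous V :=
  continuousOn_univ.1 <| (strongConvexOn_zero.1 (hV.mono hκ)).continuousOn isOpen_univ

theorem poincareInequality_tilted_of_strongConvexOn {E : Type*} [NormedAddCommGroup E]
    [InnerProductSpace ℝ E] [FiniteDimensional ℝ E] [MeasurableSpace E] [BorelSpace E] {V : E → ℝ}
    {κ : ℝ} (hκ : 0 < κ) (hV : StrongConvexOn univ κ V) :
    PoincareInequality (volume.tilted (-V)) κ⁻¹ := by
  have V_cont : Continuous V := continuous_of_strongConvexOn_univ hκ.le hV
  by_cases hVm : Integrable (fun x => exp ((-V) x))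
  · have := isProbabilityMeasure_tilted hVm
    refine poincareInequality_tilted_of_contDiff_hasCompactSupport V_cont.neg hVm (by positivity)
      fun g g_smooth g_supp => ?_
    obtain ⟨g_diff, g'_smooth⟩ := contDiff_infty_iff_fderiv.1 g_smooth
    have g'_supp : HasCompactSupport (fderiv ℝ g) := g_supp.fderiv ℝ
    obtain ⟨B, hB⟩ := g_supp.exists_bound_of_continuous g_diff.continuous
    obtain ⟨B', hB'⟩ := g'_supp.exists_bound_of_continuous g'_smooth.continuous
    obtain ⟨K, hK⟩ := ContDiff.lipschitzWith_of_hasCompactSupport g'_supp g'_smooth (by simp)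
    exact variance_tilted_le_of_lipschitzWith_fderiv (prekopaLeindler_volume E) hκ hV
      V_cont.measurable g_diff hK
      (fun x => (hB x).trans (le_max_left B B')) (fun x => (hB' x).trans (le_max_right B B'))
  · intro f _ _ _
    simp [tilted_of_not_integrable hVm]

section BoundedPerturbation

lemma integral_le_mul_integral_of_le_smul {Ω : Type*} [MeasurableSpace Ω] {μ ν : Measure Ω}
    {A : ℝ≥0} (hνμ : ν ≤ A • μ) {F : Ω → ℝ} (hF : Integrable F μ) (hF₀ : 0 ≤ F) :
    ∫ x, F x ∂ν ≤ A * ∫ x, F x ∂μ :=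
  (integral_mono_measure hνμ (ae_of_all _ hF₀) hF.smul_measure_nnreal).trans_eq
    (integral_smul_nnreal_measure F A)

lemma variance_le_mul_variance_of_le_smul {Ω : Type*} [MeasurableSpace Ω] {μ ν : Measure Ω}
    [IsProbabilityMeasure μ] [IsProbabilityMeasure ν] {A : ℝ≥0} (hνμ : ν ≤ A • μ) {f : Ω → ℝ}
    (hf : MemLp f 2 μ) : Var[f; ν] ≤ A * Var[f; μ] := by
  have f_memLp : MemLp f 2 ν := hf.of_measure_le_smul ENNReal.coe_ne_top hνμ
  calc Var[f; ν] = Var[fun x => f x - μ[f]; ν] := (variance_sub_const f_memLp.1 _).symm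
    _ ≤ ∫ x, (f x - μ[f]) ^ 2 ∂ν :=
      variance_le_expectation_sq (f_memLp.1.sub aestronglyMeasurable_const)
    _ ≤ A * ∫ x, (f x - μ[f]) ^ 2 ∂μ :=
      integral_le_mul_integral_of_le_smul hνμ (hf.sub (memLp_const _)).integrable_sq
        fun x => sq_nonneg _
    _ = A * Var[f; μ] := by rw [variance_eq_integral hf.1.aemeasurable]

lemma PoincareInequality.of_le_smul {E : Type*} [NormedAddCommGroup E] [NormedSpace ℝ E]
    [MeasurableSpace E] {μ ν : Measure E} [IsProbabilityMeasure μ] [IsProbabilityMeasure ν]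
    {C : ℝ} (hμ : PoincareInequality μ C) (hC : 0 ≤ C) {A B : ℝ≥0} (hνμ : ν ≤ A • μ)
    (hμν : μ ≤ B • ν) : PoincareInequality ν (A * (C * B)) := by
  intro f hf f_memLp f'_memLp
  have f_memLp' : MemLp f 2 μ := f_memLp.of_measure_le_smul ENNReal.coe_ne_top hμν
  have f'_memLp' : MemLp (fderiv ℝ f) 2 μ :=
    f'_memLp.of_measure_le_smul ENNReal.coe_ne_top hμν
  calc Var[f; ν] ≤ A * Var[f; μ] := variance_le_mul_variance_of_le_smul hνμ f_memLp'
    _ ≤ A * (C * ∫ x, ‖fderiv ℝ f x‖ ^ 2 ∂μ) := by gcongr; exact hμ hf f_memLp' f'_memLp'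
    _ ≤ A * (C * (B * ∫ x, ‖fderiv ℝ f x‖ ^ 2 ∂ν)) := by
      gcongr
      exact integral_le_mul_integral_of_le_smul hμν f'_memLp.norm.integrable_sq
        fun x => sq_nonneg _
    _ = A * (C * B) * ∫ x, ‖fderiv ℝ f x‖ ^ 2 ∂ν := by ring

lemma tilted_le_smul_tilted {Ω : Type*} [MeasurableSpace Ω] {m : Measure Ω} {f g : Ω → ℝ} {c : ℝ}
    (hfg : ∀ x, f x ≤ g x + c) (hg : 0 < ∫ x, exp (g x) ∂m) :
    m.tilted f ≤
      (exp c * ((∫ x, exp (g x) ∂m) / ∫ x, exp (f x) ∂m)).toNNReal • m.tilted g := by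
  set Zf := ∫ x, exp (f x) ∂m with Zf_def
  set Zg := ∫ x, exp (g x) ∂m with Zg_def
  have : 0 ≤ Zf := integral_nonneg fun x => (exp_pos _).le
  rw [Measure.tilted, Measure.tilted, ← Zf_def, ← Zg_def, ENNReal.smul_def,
    ← withDensity_smul' _ _ ENNReal.coe_ne_top]
  refine withDensity_mono (ae_of_all _ fun x => ?_)
  rw [Pi.smul_apply, smul_eq_mul, ← ENNReal.ofReal, ← ENNReal.ofReal_mul (by positivity)]
  refine ENNReal.ofReal_le_ofReal ?_
  calc exp (f x) / Zf ≤ exp (g x + c) / Zf := by gcongr; exact hfg x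
    _ = exp c * (Zg / Zf) * (exp (g x) / Zg) := by rw [exp_add]; field_simp

lemma PoincareInequality.tilted_of_le_of_le_add {E : Type*} [NormedAddCommGroup E]
    [NormedSpace ℝ E] [MeasurableSpace E] {m : Measure E} {f g : E → ℝ} {C δ : ℝ}
    (hf : PoincareInequality (m.tilted f) C) (hC : 0 ≤ C) (hfm : AEMeasurable f m)
    (hgm : AEMeasurable g m) (hfg : ∀ x, f x ≤ g x) (hgf : ∀ x, g x ≤ f x + δ) :
    PoincareInequality (m.tilted g) (exp δ * C) := by
  rcases eq_zero_or_neZero m with rfl | _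
  · simp [PoincareInequality]
  by_cases hg_int : Integrable (fun x => exp (g x)) m
  swap
  · simp [PoincareInequality, tilted_of_not_integrable hg_int]
  have hf_int : Integrable (fun x => exp (f x)) m :=
    hg_int.mono' hfm.exp.aestronglyMeasurable <| ae_of_all _ fun x => by simpa using hfg x
  have Zf_pos := integral_exp_pos hf_int
  have Zg_pos := integral_exp_pos hg_int
  have := isProbabilityMeasure_tilted hf_int
  have := isProbabilityMeasure_tilted hg_int
  have le_f := tilted_le_smul_tilted hgf Zf_pos
  have le_g := tilted_le_smul_tilted (c := 0) (by simpa using hfg) Zg_pos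
  convert hf.of_le_smul hC le_f le_g using 1
  rw [Real.coe_toNNReal _ (by positivity), Real.coe_toNNReal _ (by positivity), exp_zero]
  field_simp

end BoundedPerturbation

section SupConvolution

variable {E : Type*} [NormedAddCommGroup E]

/-- The sup-convolution of `w` with the parabola of curvature `l`, which makes a Lipschitz function
semiconvex at the cost of a bounded error. It is a real supremum, so it is meaningful only where the
family is bounded above. -/
def supConvolution (l : ℝ) (w : E → ℝ) (x : E) : ℝ := ⨆ z, (w z - l / 2 * ‖x - z‖ ^ 2)

variable {l : ℝ} {w : E → ℝ} {M : ℝ≥0}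

lemma sub_sq_le_add_of_lipschitzWith (hl : 0 < l) (hw : LipschitzWith M w) (x z : E) :
    w z - l / 2 * ‖x - z‖ ^ 2 ≤ w x + M ^ 2 / (2 * l) := by
  have lipschitz : w z ≤ w x + M * ‖x - z‖ := by
    simpa [dist_eq_norm, norm_sub_rev] using hw.le_add_mul z x
  have young : M * ‖x - z‖ ≤ M ^ 2 / (2 * l) + l / 2 * ‖x - z‖ ^ 2 := by
    rw [← sub_nonneg]
    calc (0 : ℝ) ≤ (M - l * ‖x - z‖) ^ 2 / (2 * l) := by positivity
      _ = _ := by field_simp; ring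
  linarith

lemma bddAbove_range_of_lipschitzWith (hl : 0 < l) (hw : LipschitzWith M w) (x : E) :
    BddAbove (range fun z => w z - l / 2 * ‖x - z‖ ^ 2) :=
  ⟨_, forall_mem_range.2 (sub_sq_le_add_of_lipschitzWith hl hw x)⟩

lemma le_supConvolution (hl : 0 < l) (hw : LipschitzWith M w) (x : E) :
    w x ≤ supConvolution l w x := by
  simpa [supConvolution] using le_ciSup (bddAbove_range_of_lipschitzWith hl hw x) x

lemma supConvolution_le (hl : 0 < l) (hw : LipschitzWith M w) (x : E) :
    supConvolution l w x ≤ w x + M ^ 2 / (2 * l) :=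
  ciSup_le (sub_sq_le_add_of_lipschitzWith hl hw x)

lemma uniformConvexOn_iSup {ι F : Type*} [Nonempty ι] [NormedAddCommGroup F] [NormedSpace ℝ F]
    {s : Set F} {φ : ℝ → ℝ} {g : ι → F → ℝ} (hg : ∀ i, UniformConvexOn s φ (g i))
    (hbdd : ∀ x ∈ s, BddAbove (range fun i => g i x)) :
    UniformConvexOn s φ fun x => ⨆ i, g i x := by
  refine ⟨(hg (Classical.arbitrary ι)).1, fun x hx y hy a b ha hb hab => ciSup_le fun i => ?_⟩
  refine ((hg i).2 hx hy ha hb hab).trans ?_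
  gcongr
  exacts [le_ciSup (hbdd x hx) i, le_ciSup (hbdd y hy) i]

lemma strongConvexOn_supConvolution [InnerProductSpace ℝ E] (hl : 0 < l)
    (hw : LipschitzWith M w) : StrongConvexOn univ (-l) (supConvolution l w) := by
  refine uniformConvexOn_iSup (fun z => strongConvexOn_iff_convex.2 ?_)
    fun x _ => bddAbove_range_of_lipschitzWith hl hw x
  have affine (x : E) : w z - l / 2 * ‖x - z‖ ^ 2 - -l / 2 * ‖x‖ ^ 2 =
      l * ⟪z, x⟫ + (w z - l / 2 * ‖z‖ ^ 2) := by
    rw [norm_sub_sq_real, real_inner_comm]; ring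
  simp only [affine]
  exact ((l • innerSL ℝ z).toLinearMap.convexOn convex_univ).add_const _

end SupConvolution

section Gradient

variable {E : Type*} [NormedAddCommGroup E] [InnerProductSpace ℝ E] [CompleteSpace E]

lemma norm_gradient (f : E → ℝ) (x : E) : ‖gradient f x‖ = ‖fderiv ℝ f x‖ :=
  (InnerProductSpace.toDual ℝ E).symm.norm_map _

lemma lipschitzWith_of_norm_gradient_le {w : E → ℝ} {M : ℝ≥0}
    (hw : Differentiable ℝ w) (hM : ∀ x, ‖gradient w x‖ ≤ M) : LipschitzWith M w :=
  lipschitzWith_of_nnnorm_fderiv_le hw fun x => by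
    simpa only [← NNReal.coe_le_coe, coe_nnnorm, norm_gradient] using hM x

/- Along the line `t ↦ x + t • (y - x)`, subtracting `η / 2 * ‖y - x‖ ^ 2 * t ^ 2` leaves a function
with monotone derivative. -/
lemma strongConvexOn_univ_of_gradient {v : E → ℝ} {η : ℝ} (hv : Differentiable ℝ v)
    (hη : ∀ x y, η * ‖x - y‖ ^ 2 ≤ ⟪gradient v x - gradient v y, x - y⟫) :
    StrongConvexOn univ η v := by
  refine ⟨convex_univ, fun x _ y _ a b ha hb hab => ?_⟩
  set γ : ℝ → E := fun t => x + t • (y - x)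
  set φ : ℝ → ℝ := fun t => v (γ t) - η / 2 * ‖y - x‖ ^ 2 * t ^ 2 with φ_def
  have φ_deriv (t : ℝ) :
      HasDerivAt φ (⟪gradient v (γ t), y - x⟫ - η * ‖y - x‖ ^ 2 * t) t := by
    have γ_deriv : HasDerivAt γ (y - x) t := by
      simpa [γ, hasDerivAt_const_add_iff] using ((hasDerivAt_id t).smul_const (y - x)).const_add x
    rw [inner_gradient_left]
    convert! ((hv (γ t)).hasFDerivAt.comp_hasDerivAt t γ_deriv).sub
      ((hasDerivAt_pow 2 t).const_mul (η / 2 * ‖y - x‖ ^ 2)) using 1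
    ring
  have φ'_mono : Monotone (deriv φ) := by
    intro s t hst
    rw [(φ_deriv s).deriv, (φ_deriv t).deriv]
    rcases hst.eq_or_lt with rfl | hst
    · rfl
    have γ_sub : γ t - γ s = (t - s) • (y - x) := by simp only [γ, sub_smul]; abel
    have := hη (γ t) (γ s)
    rw [γ_sub, norm_smul, inner_smul_right, inner_sub_left, norm_of_nonneg (sub_pos.2 hst).le,
      show η * ((t - s) * ‖y - x‖) ^ 2 = (t - s) * (η * ‖y - x‖ ^ 2 * (t - s)) by ring] at this
    linarith [le_of_mul_le_mul_left this (sub_pos.2 hst)]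
  have φ_convex : ConvexOn ℝ univ φ :=
    φ'_mono.convexOn_univ_of_deriv fun t => (φ_deriv t).differentiableAt
  have γ_b : γ b = a • x + b • y := by
    rw [eq_sub_of_add_eq hab]; simp only [γ, smul_sub, sub_smul, one_smul]; abel
  have := φ_convex.2 (mem_univ 0) (mem_univ 1) ha hb hab
  simp only [φ_def, γ_b, smul_eq_mul, mul_zero, mul_one, zero_add] at this
  simp only [γ, zero_smul, one_smul, add_zero, add_sub_cancel] at this
  rw [norm_sub_rev, smul_eq_mul, smul_eq_mul]
  linear_combination this + η / 2 * ‖y - x‖ ^ 2 * b * hab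

end Gradient

lemma withDensity_exp_div_eq_tilted {Ω : Type*} [MeasurableSpace Ω] {m : Measure Ω} {f : Ω → ℝ}
    (hf : AEMeasurable f m) {Z : ℝ} (hZ : 0 < Z)
    [IsProbabilityMeasure (m.withDensity fun x => ENNReal.ofReal (exp (f x) / Z))] :
    m.withDensity (fun x => ENNReal.ofReal (exp (f x) / Z)) = m.tilted f := by
  have mass : ∫⁻ x, ENNReal.ofReal (exp (f x) / Z) ∂m = 1 := by
    rw [← setLIntegral_univ, ← withDensity_apply _ .univ, measure_univ]
  have integral_eq : ∫ x, exp (f x) / Z ∂m = 1 := by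
    rw [integral_eq_lintegral_of_nonneg_ae (ae_of_all _ fun x => by positivity)
      (hf.exp.div_const Z).aestronglyMeasurable, mass, ENNReal.toReal_one]
  rw [integral_div, div_eq_one_iff_eq hZ.ne'] at integral_eq
  rw [Measure.tilted, integral_eq]

lemma PoincareInequality.integral_sq_le {E : Type*} [NormedAddCommGroup E]
    [InnerProductSpace ℝ E] [FiniteDimensional ℝ E] [MeasurableSpace E] [BorelSpace E]
    {μ : Measure E} {C : ℝ} (hμ : PoincareInequality μ C) {f : E → ℝ} (hf : Differentiable ℝ f)
    (hf_sq : Integrable (fun x => f x ^ 2) μ)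
    (hf'_sq : Integrable (fun x => ‖gradient f x‖ ^ 2) μ) (hf₀ : ∫ x, f x ∂μ = 0) :
    ∫ x, f x ^ 2 ∂μ ≤ C * ∫ x, ‖gradient f x‖ ^ 2 ∂μ := by
  have f_meas := hf.continuous.aestronglyMeasurable (μ := μ)
  simp only [norm_gradient] at hf'_sq ⊢
  rw [← variance_of_integral_eq_zero f_meas.aemeasurable hf₀]
  exact hμ hf ((memLp_two_iff_integrable_sq f_meas).2 hf_sq)
    ((memLp_two_iff_integrable_sq_norm (measurable_fderiv ℝ f).aestronglyMeasurable).2 hf'_sq)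

theorem poincare_convex_plus_lipschitz_general {E : Type*} [NormedAddCommGroup E]
    [InnerProductSpace ℝ E] [FiniteDimensional ℝ E] [MeasurableSpace E] [BorelSpace E]
    {v w : E → ℝ} {η : ℝ} {M : ℝ≥0} (hη : 0 < η) (hv : StrongConvexOn univ η v)
    (hw : LipschitzWith M w) :
    PoincareInequality (volume.tilted (-(v + w))) (exp (M ^ 2 / η) * (2 / η)) := by
  set W := supConvolution (η / 2) w
  have strongConvex : StrongConvexOn univ (η / 2) (v + W) := by
    refine (hv.add (strongConvexOn_supConvolution (half_pos hη) hw)).mono fun r => ?_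
    simp only [Pi.add_apply]
    linarith
  have w_le (x : E) : w x ≤ W x := le_supConvolution (half_pos hη) hw x
  have W_le (x : E) : W x ≤ w x + M ^ 2 / η := by
    simpa [mul_div_cancel₀] using supConvolution_le (half_pos hη) hw x
  rw [← inv_div η 2]
  refine (poincareInequality_tilted_of_strongConvexOn (half_pos hη)
    strongConvex).tilted_of_le_of_le_add (by positivity)
    (continuous_of_strongConvexOn_univ (half_pos hη).le strongConvex).neg.aemeasurable
    ((continuous_of_strongConvexOn_univ hη.le hv).add hw.continuous).neg.aemeasurable
    (fun x => ?_) fun x => ?_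
  · simpa using w_le x
  · simp only [Pi.neg_apply, Pi.add_apply]
    linarith [W_le x]

/-- Poincaré inequality for measures `p ∝ e^{−(v+w)}` with `∇²v ≥ η I` and
`|∇w| ≤ M`: the constant `C_P` depends only on `η`, `M` and the dimension `d`. -/
theorem poincare_convex_plus_lipschitz (d : ℕ) (η M : ℝ) (hη : 0 < η) (hM : 0 ≤ M) :
    ∃ CP : ℝ, 0 < CP ∧
      ∀ u v w : Euc d → ℝ, (∀ x, u x = v x + w x) →
        ContDiff ℝ 2 v → ContDiff ℝ 2 w →
        (∀ x y : Euc d, η * ‖x - y‖ ^ 2 ≤ ⟪gradient v x - gradient v y, x - y⟫) →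
        (∀ x, ‖gradient w x‖ ≤ M) →
        ∀ Z : ℝ, 0 < Z →
          ∀ μ : Measure (Euc d),
            μ = volume.withDensity (fun x => ENNReal.ofReal (Real.exp (-u x) / Z)) →
            IsProbabilityMeasure μ →
            ∀ f : Euc d → ℝ, Differentiable ℝ f →
              Integrable f μ → Integrable (fun x => (f x) ^ 2) μ →
              Integrable (fun x => ‖gradient f x‖ ^ 2) μ →
              (∫ x, f x ∂μ) = 0 →
              (∫ x, (f x) ^ 2 ∂μ) ≤ CP * ∫ x, ‖gradient f x‖ ^ 2 ∂μ := by
  lift M to ℝ≥0 using hM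
  refine ⟨exp (M ^ 2 / η) * (2 / η), by positivity, ?_⟩
  rintro u v w huvw hv hw v_mono w_bound Z hZ μ rfl _ f f_diff - f_sq f'_sq f_zero
  obtain rfl : u = v + w := funext huvw
  have u_meas : AEMeasurable (-(v + w)) := (hv.continuous.add hw.continuous).neg.aemeasurable
  have tilted_eq := withDensity_exp_div_eq_tilted u_meas hZ
  have poincare := poincare_convex_plus_lipschitz_general hη
    (strongConvexOn_univ_of_gradient (hv.differentiable two_ne_zero) v_mono)
    (lipschitzWith_of_norm_gradient_le (hw.differentiable two_ne_zero) w_bound)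
  rw [← tilted_eq] at poincare
  exact poincare.integral_sq_le f_diff f_sq f'_sq f_zero
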